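/- Complexity-measure bound with an ε-differentially private prior: Let ℓ : H × Z → ℝ be a measurable loss, φ : ℝ² → ℝ measurable, μ : H × Z^m → ℝ a measurable parametric function with finite positive Gibbs normalizer, and S ↦ P_S an ε-differentially private randomized mechanism on H. For any probability measure D on Z and any δ ∈ (0,1], with probability at least 1−δ over S′ ∼ D^m, S ∼ D^m, h′ ∼ P_S, and h ∼ Q_S (Gibbs posterior for μ) one has φ(R_D^ℓ(h), R_S^ℓ(h)) ≤ μ(h′,S) − μ(h,S) + ln(P_S(h′)/P_S(h)) + m·ε + ln[(4/δ²)·E_{V∼D^m} E_{g∼P_{S′}} e^{φ(R_D^ℓ(g), R_V^ℓ(g))}]. -/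

import Mathlib

open MeasureTheory ProbabilityTheory

/-- The true risk `R_D^ℓ(h) = E_{z∼D} ℓ(h,z)`. -/
noncomputable def trueRisk {H Z : Type*} [MeasurableSpace Z]
    (D : Measure Z) (ℓ : H → Z → ℝ) (h : H) : ℝ :=
  ∫ z, ℓ h z ∂D

/-- The empirical risk `R_S^ℓ(h) = (1/m) Σ_{i=1}^m ℓ(h,z_i)`. -/
noncomputable def empRisk {H Z : Type*} {m : ℕ}
    (ℓ : H → Z → ℝ) (h : H) (S : Fin m → Z) : ℝ :=
  (∑ i, ℓ h (S i)) / m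


/-- A core two-fold Markov estimate, valid without measurability of the prior density. -/
lemma core_markov {H : Type*} [MeasurableSpace H] (lam : Measure H)
    (P q u : H → ℝ) (hP : ∀ h, 0 < P h) (hq : ∀ h, 0 < q h) (hqm : Measurable q)
    (hu : ∀ h, 0 < u h) (hum : Measurable u)
    (ν ρ : Measure H) [IsProbabilityMeasure ν] [IsProbabilityMeasure ρ]
    (hν : ν = lam.withDensity fun h => ENNReal.ofReal (P h))
    (hρ : ρ = lam.withDensity fun h => ENNReal.ofReal (q h))
    (K d : ℝ) (hK : 0 < K) (hd : 0 < d) (B : Set (H × H)) (hBm : MeasurableSet B)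
    (hB : ∀ p ∈ B, K * (P p.1 * q p.2) < u p.2 * P p.2 * q p.1) :
    (ν.prod ρ) B ≤ ENNReal.ofReal d +
      (ENNReal.ofReal (K * d))⁻¹ * ∫⁻ h, ENNReal.ofReal (u h) ∂ν := by
  obtain ⟨g, hgm, hgle, hgeq⟩ :=
    exists_measurable_le_lintegral_eq lam (fun h => ENNReal.ofReal (P h))
  have hνuniv : ν Set.univ = ∫⁻ h, ENNReal.ofReal (P h) ∂lam := by
    rw [hν, withDensity_apply _ MeasurableSet.univ, Measure.restrict_univ]
  have hfin : IsFiniteMeasure (lam.withDensity g) := by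
    refine isFiniteMeasure_withDensity ?_
    rw [← hgeq, ← hνuniv]
    exact measure_ne_top _ _
  have hgν : lam.withDensity g = ν := by
    apply Measure.eq_of_le_of_measure_univ_eq
    · rw [hν]
      refine Measure.le_iff.2 fun s hs => ?_
      rw [withDensity_apply _ hs, withDensity_apply _ hs]
      exact lintegral_mono hgle
    · rw [hνuniv, withDensity_apply _ MeasurableSet.univ, Measure.restrict_univ, hgeq]
  set B1 : Set H := {h | g h ≤ ENNReal.ofReal (d * q h)} with hB1
  have hB1m : MeasurableSet B1 :=
    measurableSet_le hgm (ENNReal.measurable_ofReal.comp (hqm.const_mul d))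
  have h1 : ν B1 ≤ ENNReal.ofReal d := by
    rw [← hgν, withDensity_apply _ hB1m]
    calc ∫⁻ h in B1, g h ∂lam
        ≤ ∫⁻ h in B1, ENNReal.ofReal d * ENNReal.ofReal (q h) ∂lam := by
          refine setLIntegral_mono' hB1m fun h hh => ?_
          rw [← ENNReal.ofReal_mul hd.le]; exact hh
      _ = ENNReal.ofReal d * ρ B1 := by
          rw [lintegral_const_mul' _ _ ENNReal.ofReal_ne_top, hρ, withDensity_apply _ hB1m]
      _ ≤ ENNReal.ofReal d * 1 := by gcongr; exact prob_le_one
      _ = _ := mul_one _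
  have hKd : 0 < K * d := mul_pos hK hd
  -- Markov for measurable subsets of the second bad set
  have h2 : ∀ N : Set H, MeasurableSet N → (∀ h ∈ N, K * d * q h ≤ u h * P h) →
      ρ N ≤ (ENNReal.ofReal (K * d))⁻¹ * ∫⁻ h, ENNReal.ofReal (u h) ∂ν := by
    intro N hN hNle
    rw [mul_comm, ← div_eq_mul_inv, ENNReal.le_div_iff_mul_le
      (Or.inl (by simpa using hKd)) (Or.inl ENNReal.ofReal_ne_top)]
    set c : H → ENNReal := fun h => ENNReal.ofReal (K * d * q h / u h) with hc
    have hcm : Measurable c :=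
      ENNReal.measurable_ofReal.comp ((hqm.const_mul _).div hum)
    have hle : (lam.withDensity c).restrict N ≤ ν.restrict N := by
      refine Measure.le_iff.2 fun s hs => ?_
      rw [Measure.restrict_apply hs, Measure.restrict_apply hs, hν,
        withDensity_apply _ (hs.inter hN), withDensity_apply _ (hs.inter hN)]
      refine setLIntegral_mono' (hs.inter hN) fun h hh => ?_
      apply ENNReal.ofReal_le_ofReal
      rw [div_le_iff₀ (hu h), mul_comm (P h)]
      exact hNle h hh.2
    have hum' : Measurable fun h => ENNReal.ofReal (u h) := ENNReal.measurable_ofReal.comp hum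
    calc ρ N * ENNReal.ofReal (K * d)
        = ∫⁻ h in N, ENNReal.ofReal (K * d) * ENNReal.ofReal (q h) ∂lam := by
          rw [lintegral_const_mul' _ _ ENNReal.ofReal_ne_top, hρ, withDensity_apply _ hN, mul_comm]
      _ = ∫⁻ h in N, (c * fun h => ENNReal.ofReal (u h)) h ∂lam := by
          refine lintegral_congr fun h => ?_
          simp only [hc, Pi.mul_apply]
          rw [← ENNReal.ofReal_mul hKd.le,
            ← ENNReal.ofReal_mul (div_nonneg (mul_nonneg hKd.le (hq h).le) (hu h).le),
            div_mul_cancel₀ _ (hu h).ne']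
      _ = ∫⁻ h, ENNReal.ofReal (u h) ∂((lam.withDensity c).restrict N) := by
          rw [restrict_withDensity hN, lintegral_withDensity_eq_lintegral_mul _ hcm hum']
      _ ≤ ∫⁻ h, ENNReal.ofReal (u h) ∂(ν.restrict N) := lintegral_mono' hle le_rfl
      _ ≤ _ := setLIntegral_le_lintegral _ _
  have hsub : B ⊆ (B1 ×ˢ Set.univ) ∪ (B \ (B1 ×ˢ Set.univ)) := by
    intro p hp
    by_cases h : p ∈ B1 ×ˢ (Set.univ : Set H)
    · exact Or.inl h
    · exact Or.inr ⟨hp, h⟩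
  have hEm : MeasurableSet (B \ (B1 ×ˢ (Set.univ : Set H))) :=
    hBm.diff (hB1m.prod MeasurableSet.univ)
  refine (measure_mono hsub).trans ((measure_union_le _ _).trans (add_le_add ?_ ?_))
  · rw [Measure.prod_prod]; simpa using h1
  · rw [Measure.prod_apply hEm]
    calc _ ≤ ∫⁻ _ : H, (ENNReal.ofReal (K * d))⁻¹ * ∫⁻ h, ENNReal.ofReal (u h) ∂ν ∂ν := by
          refine lintegral_mono fun h' => h2 _ (measurable_prodMk_left hEm) ?_
          intro h hh
          have hb := hB _ hh.1
          have hn : h' ∉ B1 := fun hc => hh.2 ⟨hc, Set.mem_univ _⟩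
          simp only [hB1, Set.mem_setOf_eq, not_le] at hn
          have h3 : d * q h' < P h' := by
            have := hn.trans_le (hgle h')
            exact (ENNReal.ofReal_lt_ofReal_iff (hP h')).1 this
          simp only at hb
          have h4 : K * (d * q h' * q h) ≤ K * (P h' * q h) := by
            have := hq h
            gcongr
          have h5 : (K * d * q h) * q h' ≤ (u h * P h) * q h' := by nlinarith
          exact le_of_mul_le_mul_right h5 (hq h')
      _ = _ := by simp

/-- One-step privacy as a domination of measures. -/
lemma dp_step {H : Type*} [MeasurableSpace H] (lam : Measure H)
    (P P' : H → ℝ) (hP : ∀ h, 0 < P h) (ν ν' : Measure H)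
    (hν : ν = lam.withDensity fun h => ENNReal.ofReal (P h))
    (hν' : ν' = lam.withDensity fun h => ENNReal.ofReal (P' h)) (ε : ℝ)
    (h : essSup (fun h => ENNReal.ofReal (P' h / P h)) ν' ≤ ENNReal.ofReal (Real.exp ε)) :
    ν' ≤ ENNReal.ofReal (Real.exp ε) • ν := by
  have hae : ∀ᵐ x ∂ν', ENNReal.ofReal (P' x / P x) ≤ ENNReal.ofReal (Real.exp ε) :=
    (ENNReal.ae_le_essSup _).mono fun x hx => hx.trans h
  set N := toMeasurable ν' {x | ¬ ENNReal.ofReal (P' x / P x) ≤ ENNReal.ofReal (Real.exp ε)}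
    with hN
  have hN0 : ν' N = 0 := by rw [hN, measure_toMeasurable]; exact hae
  have hNm : MeasurableSet N := measurableSet_toMeasurable _ _
  refine Measure.le_iff.2 fun A hA => ?_
  have hAm := hA.diff hNm
  calc ν' A = ν' (A \ N) := (measure_diff_null hN0).symm
    _ = ∫⁻ x in A \ N, ENNReal.ofReal (P' x) ∂lam := by rw [hν', withDensity_apply _ hAm]
    _ ≤ ∫⁻ x in A \ N, ENNReal.ofReal (Real.exp ε) * ENNReal.ofReal (P x) ∂lam := by
        refine setLIntegral_mono' hAm fun x hx => ?_
        rw [← ENNReal.ofReal_mul (Real.exp_pos ε).le]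
        apply ENNReal.ofReal_le_ofReal
        have : ENNReal.ofReal (P' x / P x) ≤ ENNReal.ofReal (Real.exp ε) := by
          by_contra hc
          exact hx.2 (subset_toMeasurable _ _ hc)
        rw [ENNReal.ofReal_le_ofReal_iff (Real.exp_pos ε).le] at this
        exact (div_le_iff₀ (hP x)).1 this
    _ = ENNReal.ofReal (Real.exp ε) * ν (A \ N) := by
        rw [lintegral_const_mul' _ _ ENNReal.ofReal_ne_top, hν, withDensity_apply _ hAm]
    _ ≤ ENNReal.ofReal (Real.exp ε) * ν A := by gcongr; exact Set.diff_subset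
    _ = _ := by simp

/-- Group privacy. -/
lemma dp_group {Z H : Type*} [MeasurableSpace H] (m : ℕ)
    (κ : (Fin m → Z) → Measure H) (ε : ℝ)
    (h : ∀ T T' : Fin m → Z, (∃ j : Fin m, ∀ i, i ≠ j → T i = T' i) →
      κ T' ≤ ENNReal.ofReal (Real.exp ε) • κ T) (S S' : Fin m → Z) :
    κ S ≤ ENNReal.ofReal (Real.exp (m * ε)) • κ S' := by
  have key : ∀ k : ℕ, k ≤ m →
      κ (fun i => if (i : ℕ) < k then S i else S' i) ≤
        ENNReal.ofReal (Real.exp (k * ε)) • κ S' := by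
    intro k
    induction k with
    | zero => intro _; simp
    | succ k ih =>
      intro hk
      have h1 := h (fun i => if (i : ℕ) < k then S i else S' i)
        (fun i => if (i : ℕ) < k + 1 then S i else S' i) ⟨⟨k, hk⟩, fun i hi => by
          have : (i : ℕ) ≠ k := fun hc => hi (Fin.ext hc)
          have h2 : (i : ℕ) < k ↔ (i : ℕ) < k + 1 := by omega
          simp only [h2]⟩
      refine h1.trans ?_
      have h3 := ih (by omega)
      refine Measure.le_iff.2 fun A _ => ?_
      have h4 := h3 A
      simp only [Measure.smul_apply, smul_eq_mul] at h4 ⊢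
      refine (mul_le_mul_right h4 _).trans (le_of_eq ?_)
      rw [← mul_assoc, ← ENNReal.ofReal_mul (Real.exp_pos ε).le, ← Real.exp_add]
      congr 3
      push_cast; ring
  have := key m le_rfl
  simpa using this

/-- **Complexity-measure bound with an ε-differentially private prior.**
With probability at least `1−δ` over `S′ ∼ D^m`, `S ∼ D^m`, `h′ ∼ P_S` and
`h ∼ Q_S` (Gibbs posterior for `μ`),
`φ(R_D^ℓ(h), R_S^ℓ(h)) ≤ μ(h′,S) − μ(h,S) + ln(P_S(h′)/P_S(h)) + m·ε
  + ln[(4/δ²)·E_{V∼D^m} E_{g∼P_{S′}} e^{φ(R_D^ℓ(g), R_V^ℓ(g))}]`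
(stated in `EReal`). -/
theorem complexity_bound_with_dp_prior
    {Z H : Type*} [MeasurableSpace Z] [MeasurableSpace H]
    (m : ℕ) (hm : 0 < m)
    (D : Measure Z) [IsProbabilityMeasure D]
    (lam : Measure H) [SigmaFinite lam]
    (ℓ : H → Z → ℝ) (hℓ : Measurable (Function.uncurry ℓ))
    (φ : ℝ → ℝ → ℝ) (hφ : Measurable (Function.uncurry φ))
    -- the randomized prior mechanism, with strictly positive densities
    (Pd : (Fin m → Z) → H → ℝ) (hPdpos : ∀ S h, 0 < Pd S h)
    (κP : Kernel (Fin m → Z) H) [IsMarkovKernel κP]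
    (hκP : ∀ S, κP S = lam.withDensity fun h => ENNReal.ofReal (Pd S h))
    (ε : ℝ) (hε : 0 ≤ ε)
    -- ε-differential privacy of the mechanism
    (hDP : ∀ T T' : Fin m → Z, (∃ j : Fin m, ∀ i, i ≠ j → T i = T' i) →
      essSup (fun h => ENNReal.ofReal (Pd T' h / Pd T h)) (κP T') ≤
        ENNReal.ofReal (Real.exp ε))
    -- the Gibbs posterior for `μ`
    (μ : H → (Fin m → Z) → ℝ) (hμ : Measurable (Function.uncurry μ))
    (hμint : ∀ S, Integrable (fun g => Real.exp (-(μ g S))) lam)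
    (hZpos : ∀ S : Fin m → Z, 0 < ∫ g, Real.exp (-(μ g S)) ∂lam)
    (κQ : Kernel (Fin m → Z) H) [IsMarkovKernel κQ]
    (hκQ : ∀ S, κQ S = lam.withDensity fun h =>
      ENNReal.ofReal (Real.exp (-(μ h S)) / ∫ g, Real.exp (-(μ g S)) ∂lam))
    (δ : ℝ) (hδ : δ ∈ Set.Ioc (0:ℝ) 1) :
    1 - ENNReal.ofReal δ ≤
      ((Measure.pi (fun _ : Fin m => D)).prod
          (Measure.pi (fun _ : Fin m => D) ⊗ₘ (κP ×ₖ κQ)))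
        {p : (Fin m → Z) × ((Fin m → Z) × (H × H)) |
          (φ (trueRisk D ℓ p.2.2.2) (empRisk ℓ p.2.2.2 p.2.1) : EReal) ≤
            ((μ p.2.2.1 p.2.1 - μ p.2.2.2 p.2.1
                + Real.log (Pd p.2.1 p.2.2.1 / Pd p.2.1 p.2.2.2)
                + m * ε : ℝ) : EReal)
            + ENNReal.log (ENNReal.ofReal (4/δ^2) *
                ∫⁻ V, ∫⁻ g, ENNReal.ofReal
                    (Real.exp (φ (trueRisk D ℓ g) (empRisk ℓ g V))) ∂(κP p.1)
                  ∂(Measure.pi (fun _ : Fin m => D))) } := by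
  classical
  have hδ0 : 0 < δ := hδ.1
  set π : Measure (Fin m → Z) := Measure.pi (fun _ : Fin m => D) with hπ
  set ξ : (Fin m → Z) → ENNReal := fun S' => ∫⁻ V, ∫⁻ g, ENNReal.ofReal
    (Real.exp (φ (trueRisk D ℓ g) (empRisk ℓ g V))) ∂(κP S') ∂π with hξ
  have htr : Measurable fun g : H => trueRisk D ℓ g := by
    unfold trueRisk
    exact (hℓ.stronglyMeasurable.integral_prod_right (ν := D)).measurable
  have hemp : Measurable fun p : (Fin m → Z) × H => empRisk ℓ p.2 p.1 := by
    unfold empRisk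
    refine Measurable.div_const (Finset.measurable_sum _ fun i _ => ?_) _
    exact hℓ.comp (measurable_snd.prodMk ((measurable_pi_apply i).comp measurable_fst))
  have hφm : Measurable fun p : (Fin m → Z) × H =>
      Real.exp (φ (trueRisk D ℓ p.2) (empRisk ℓ p.2 p.1)) :=
    Real.measurable_exp.comp (hφ.comp ((htr.comp measurable_snd).prodMk hemp))
  have hF : Measurable fun p : (Fin m → Z) × H => ENNReal.ofReal
      (Real.exp (φ (trueRisk D ℓ p.2) (empRisk ℓ p.2 p.1))) :=
    ENNReal.measurable_ofReal.comp hφm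
  have hgrp : ∀ S S', κP S ≤ ENNReal.ofReal (Real.exp (m * ε)) • κP S' :=
    dp_group m (fun S => κP S) ε fun T T' hT =>
      dp_step lam (Pd T) (Pd T') (hPdpos T) _ _ (hκP T) (hκP T') ε (hDP T T' hT)
  set J := (π.prod (π ⊗ₘ (κP ×ₖ κQ))) with hJ
  set G : Set ((Fin m → Z) × ((Fin m → Z) × (H × H))) := {p |
          (φ (trueRisk D ℓ p.2.2.2) (empRisk ℓ p.2.2.2 p.2.1) : EReal) ≤
            ((μ p.2.2.1 p.2.1 - μ p.2.2.2 p.2.1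
                + Real.log (Pd p.2.1 p.2.2.1 / Pd p.2.1 p.2.2.2)
                + m * ε : ℝ) : EReal)
            + ENNReal.log (ENNReal.ofReal (4/δ^2) * ξ p.1)} with hG
  change 1 - ENNReal.ofReal δ ≤ J G
  have hMm : MeasurableSet (toMeasurable J G) := measurableSet_toMeasurable _ _
  suffices hbad : J (toMeasurable J G)ᶜ ≤ ENNReal.ofReal δ by
    rw [tsub_le_iff_right, ← measure_toMeasurable G]
    calc (1 : ENNReal) = J Set.univ := measure_univ.symm
      _ = J (toMeasurable J G) + J (toMeasurable J G)ᶜ := (measure_add_measure_compl hMm).symm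
      _ ≤ _ := by gcongr
  have hBsub : (toMeasurable J G)ᶜ ⊆ Gᶜ := Set.compl_subset_compl.2 (subset_toMeasurable _ _)
  have hBm : MeasurableSet (toMeasurable J G)ᶜ := hMm.compl
  generalize (toMeasurable J G)ᶜ = B at hBsub hBm
  rw [hJ, Measure.prod_apply hBm]
  suffices hsec : ∀ S', (π ⊗ₘ (κP ×ₖ κQ)) (Prod.mk S' ⁻¹' B) ≤ ENNReal.ofReal δ by
    calc _ ≤ ∫⁻ _ : Fin m → Z, ENNReal.ofReal δ ∂π := lintegral_mono hsec
      _ = _ := by simp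
  intro S'
  have hBm' : MeasurableSet (Prod.mk S' ⁻¹' B) := measurable_prodMk_left hBm
  by_cases htop : ξ S' = ⊤
  · have : Prod.mk S' ⁻¹' B = ∅ := by
      rw [Set.eq_empty_iff_forall_notMem]
      intro p hp
      apply hBsub hp
      have h4 : ENNReal.ofReal (4/δ^2) ≠ 0 := by
        rw [Ne, ENNReal.ofReal_eq_zero, not_le]; positivity
      simp only [hG, Set.mem_setOf_eq, htop, ENNReal.mul_top h4, ENNReal.log_top]
      rw [EReal.coe_add_top]
      exact le_top
    rw [this]; simp
  have hξpos : ξ S' ≠ 0 := by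
    intro h0
    have hmeas : Measurable fun V : Fin m → Z => ∫⁻ g, ENNReal.ofReal
        (Real.exp (φ (trueRisk D ℓ g) (empRisk ℓ g V))) ∂(κP S') := hF.lintegral_prod_right'
    rw [hξ] at h0
    simp only at h0
    rw [lintegral_eq_zero_iff hmeas] at h0
    obtain ⟨V, hV⟩ := h0.exists
    have hm2 : Measurable fun g : H => ENNReal.ofReal
        (Real.exp (φ (trueRisk D ℓ g) (empRisk ℓ g V))) := hF.comp measurable_prodMk_left
    simp only [Pi.zero_apply] at hV
    rw [lintegral_eq_zero_iff hm2] at hV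
    obtain ⟨g, hg⟩ := hV.exists
    simp only [Pi.zero_apply, ENNReal.ofReal_eq_zero] at hg
    exact absurd (Real.exp_pos _) (not_lt.2 hg)
  obtain ⟨x, hx0, hx⟩ : ∃ x : ℝ, 0 < x ∧ ξ S' = ENNReal.ofReal x :=
    ⟨(ξ S').toReal, ENNReal.toReal_pos hξpos htop, (ENNReal.ofReal_toReal htop).symm⟩
  set C : ℝ := Real.exp (m * ε) with hC
  have hC0 : 0 < C := Real.exp_pos _
  set K : ℝ := C * (4/δ^2 * x) with hK
  have hK0 : 0 < K := by positivity
  have hKd : K * (δ/2) = C * x * (2/δ) := by rw [hK]; field_simp; ring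
  rw [Measure.compProd_apply hBm']
  have hpt : ∀ S, (κP ×ₖ κQ) S (Prod.mk S ⁻¹' (Prod.mk S' ⁻¹' B)) ≤
      ENNReal.ofReal (δ/2) + (ENNReal.ofReal (K * (δ/2)))⁻¹ *
        (ENNReal.ofReal C * ∫⁻ g, ENNReal.ofReal
          (Real.exp (φ (trueRisk D ℓ g) (empRisk ℓ g S))) ∂(κP S')) := by
    intro S
    rw [Kernel.prod_apply]
    have hZ := hZpos S
    have hμS : Measurable fun h => μ h S := hμ.comp measurable_prodMk_right
    refine (core_markov lam (Pd S) (fun h => Real.exp (-(μ h S)) / ∫ g, Real.exp (-(μ g S)) ∂lam)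
      (fun g => Real.exp (φ (trueRisk D ℓ g) (empRisk ℓ g S))) (hPdpos S)
      (fun h => div_pos (Real.exp_pos _) hZ)
      ((Real.measurable_exp.comp hμS.neg).div_const _) (fun _ => Real.exp_pos _)
      (hφm.comp measurable_prodMk_left) (κP S) (κQ S) (hκP S) (hκQ S) K (δ/2) hK0 (by positivity)
      _ (measurable_prodMk_left hBm') ?_).trans ?_
    · rintro ⟨h', h⟩ hp
      have hp' := hBsub hp
      simp only [hG, Set.mem_compl_iff, Set.mem_setOf_eq, not_le, hx] at hp'
      rw [← ENNReal.ofReal_mul (by positivity), ENNReal.log_ofReal_of_pos (by positivity),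
        ← EReal.coe_add, EReal.coe_lt_coe_iff, ← Real.exp_lt_exp] at hp'
      have hP := hPdpos S h
      have hP' := hPdpos S h'
      rw [Real.exp_add, Real.exp_add, Real.exp_add, Real.exp_log (by positivity),
        Real.exp_log (by positivity), ← hC, sub_eq_add_neg, Real.exp_add] at hp'
      have he : Real.exp (μ h' S) * Real.exp (-(μ h' S)) = 1 := by
        rw [← Real.exp_add]; simp
      have hq' := Real.exp_pos (-(μ h' S))
      simp only
      have h6 := mul_lt_mul_of_pos_right hp'
        (mul_pos hP (div_pos hq' hZ))
      refine lt_of_eq_of_lt ?_ (h6.trans_eq (by ring))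
      rw [hK]
      have h7 : Real.exp (μ h' S) = (Real.exp (-(μ h' S)))⁻¹ := by
        rw [Real.exp_neg, inv_inv]
      rw [h7]
      field_simp
    · gcongr
      calc _ ≤ ∫⁻ g, ENNReal.ofReal (Real.exp (φ (trueRisk D ℓ g) (empRisk ℓ g S)))
            ∂(ENNReal.ofReal C • κP S') := lintegral_mono' (hgrp S S') le_rfl
        _ = _ := by rw [lintegral_smul_measure, smul_eq_mul]
  refine (lintegral_mono hpt).trans ?_
  rw [lintegral_add_left measurable_const, lintegral_const_mul' _ _ (by
      rw [Ne, ENNReal.inv_eq_top, ENNReal.ofReal_eq_zero, not_le]; positivity),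
    lintegral_const_mul' _ _ ENNReal.ofReal_ne_top]
  change _ + _ * (_ * ξ S') ≤ _
  rw [hx, hKd, ← ENNReal.ofReal_mul hC0.le, ← ENNReal.ofReal_inv_of_pos (by positivity),
    ← ENNReal.ofReal_mul (by positivity)]
  simp only [lintegral_const, measure_univ, mul_one]
  rw [← ENNReal.ofReal_add (by positivity) (by positivity)]
  apply ENNReal.ofReal_le_ofReal
  apply le_of_eq
  field_simp
  ring
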